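/- Let n, k be positive natural numbers and w₀ ∈ ℝ. Let Wf, Wi, Wg : ℝ → Matrix (Fin n) (Fin k) ℝ be such that each entry has derivative, at w₀, given by the matrices Ef, Ei, Eg respectively; let bf, bi, bg : Fin n → ℝ; let v : ℝ → (Fin k → ℝ) with componentwise derivative v' at w₀; and let cprev : ℝ → (Fin n → ℝ) with componentwise derivative c' at w₀. Define the gates f w i = σ(((Wf w).mulVec (v w)) i + bf i), iGate w i = σ(((Wi w).mulVec (v w)) i + bi i), g w i = tanh(((Wg w).mulVec (v w)) i + bg i), and the cell state c w i = (f w i)·(cprev w i) + (iGate w i)·(g w i). Write F = diagonal of (f w₀), ψ = diag(f w₀ ⊙ (1 − f w₀) ⊙ cprev w₀) ⬝ Wf w₀ + diag((1 − (g w₀)²) ⊙ iGate w₀) ⬝ Wg w₀ + diag(iGate w₀ ⊙ (1 − iGate w₀) ⊙ g w₀) ⬝ Wi w₀, and k = diag(f w₀ ⊙ (1 − f w₀) ⊙ cprev w₀).mulVec (Ef.mulVec (v w₀)) + diag((1 − (g w₀)²) ⊙ iGate w₀).mulVec (Eg.mulVec (v w₀)) + diag(iGate w₀ ⊙ (1 −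 iGate w₀) ⊙ g w₀).mulVec (Ei.mulVec (v w₀)), with all diagonal matrices formed entrywise. Then for every i, the function w ↦ c w i has derivative (F.mulVec c') i + (ψ.mulVec v') i + k i at w₀. -/

import Mathlib

noncomputable def sigmoid (x : ℝ) : ℝ := 1 / (1 + Real.exp (-x))

section

open Matrix

variable {𝕜 : Type*} [NontriviallyNormedField 𝕜] {m p : Type*} [Fintype p]

theorem hasDerivAt_dotProduct {A : Type*} [NormedRing A] [NormedAlgebra 𝕜 A]
    {u v : 𝕜 → p → A} {u' v' : p → A} {w₀ : 𝕜}
    (hu : ∀ j, HasDerivAt (fun w => u w j) (u' j) w₀)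
    (hv : ∀ j, HasDerivAt (fun w => v w j) (v' j) w₀) :
    HasDerivAt (fun w => u w ⬝ᵥ v w) (u' ⬝ᵥ v w₀ + u w₀ ⬝ᵥ v') w₀ := by
  simp only [dotProduct, ← Finset.sum_add_distrib]
  exact HasDerivAt.fun_sum fun j _ => (hu j).mul (hv j)

theorem hasDerivAt_activation_mulVec_add {W : 𝕜 → Matrix m p 𝕜} {E : Matrix m p 𝕜}
    {v : 𝕜 → p → 𝕜} {v' : p → 𝕜} {w₀ : 𝕜} {φ : 𝕜 → 𝕜} {φ' b : 𝕜} {i : m}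
    (hφ : HasDerivAt φ φ' ((W w₀ *ᵥ v w₀) i + b))
    (hW : ∀ j, HasDerivAt (fun w => W w i j) (E i j) w₀)
    (hv : ∀ j, HasDerivAt (fun w => v w j) (v' j) w₀) :
    HasDerivAt (fun w => φ ((W w *ᵥ v w) i + b))
      (φ' * ((E *ᵥ v w₀) i + (W w₀ *ᵥ v') i)) w₀ :=
  hφ.comp w₀ ((hasDerivAt_dotProduct hW hv).add_const b)

theorem lstm_cell_state_hasDerivAt_general [Fintype m] [DecidableEq m] {w₀ : 𝕜}
    {Wf Wi Wg : 𝕜 → Matrix m p 𝕜} {Ef Ei Eg : Matrix m p 𝕜}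
    (hWf : ∀ i j, HasDerivAt (fun w => Wf w i j) (Ef i j) w₀)
    (hWi : ∀ i j, HasDerivAt (fun w => Wi w i j) (Ei i j) w₀)
    (hWg : ∀ i j, HasDerivAt (fun w => Wg w i j) (Eg i j) w₀)
    {v : 𝕜 → p → 𝕜} {v' : p → 𝕜} (hv : ∀ j, HasDerivAt (fun w => v w j) (v' j) w₀)
    {cprev : 𝕜 → m → 𝕜} {c' : m → 𝕜}
    (hcprev : ∀ i, HasDerivAt (fun w => cprev w i) (c' i) w₀)
    {φf φi φg : 𝕜 → 𝕜} {bf bi bg : m → 𝕜} {f iGate g : 𝕜 → m → 𝕜}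
    (hf : ∀ w i, f w i = φf ((Wf w *ᵥ v w) i + bf i))
    (hi : ∀ w i, iGate w i = φi ((Wi w *ᵥ v w) i + bi i))
    (hg : ∀ w i, g w i = φg ((Wg w *ᵥ v w) i + bg i))
    {φf' φi' φg' : m → 𝕜}
    (hφf : ∀ i, HasDerivAt φf (φf' i) ((Wf w₀ *ᵥ v w₀) i + bf i))
    (hφi : ∀ i, HasDerivAt φi (φi' i) ((Wi w₀ *ᵥ v w₀) i + bi i))
    (hφg : ∀ i, HasDerivAt φg (φg' i) ((Wg w₀ *ᵥ v w₀) i + bg i)) :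
    ∀ i, HasDerivAt (fun w => f w i * cprev w i + iGate w i * g w i)
      ((diagonal (f w₀) *ᵥ c') i
        + ((diagonal (fun j => φf' j * cprev w₀ j) * Wf w₀
          + diagonal (fun j => φg' j * iGate w₀ j) * Wg w₀
          + diagonal (fun j => φi' j * g w₀ j) * Wi w₀) *ᵥ v') i
        + (diagonal (fun j => φf' j * cprev w₀ j) *ᵥ (Ef *ᵥ v w₀)
          + diagonal (fun j => φg' j * iGate w₀ j) *ᵥ (Eg *ᵥ v w₀)
          + diagonal (fun j => φi' j * g w₀ j) *ᵥ (Ei *ᵥ v w₀)) i) w₀ := by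
  intro i
  have forget_deriv : HasDerivAt (fun w => f w i)
      (φf' i * ((Ef *ᵥ v w₀) i + (Wf w₀ *ᵥ v') i)) w₀ := by
    simpa only [hf] using hasDerivAt_activation_mulVec_add (hφf i) (hWf i) hv
  have input_deriv : HasDerivAt (fun w => iGate w i)
      (φi' i * ((Ei *ᵥ v w₀) i + (Wi w₀ *ᵥ v') i)) w₀ := by
    simpa only [hi] using hasDerivAt_activation_mulVec_add (hφi i) (hWi i) hv
  have candidate_deriv : HasDerivAt (fun w => g w i)
      (φg' i * ((Eg *ᵥ v w₀) i + (Wg w₀ *ᵥ v') i)) w₀ := by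
    simpa only [hg] using hasDerivAt_activation_mulVec_add (hφg i) (hWg i) hv
  refine ((forget_deriv.mul (hcprev i)).add (input_deriv.mul candidate_deriv)).congr_deriv ?_
  simp only [add_mulVec, ← mulVec_mulVec, Pi.add_apply, mulVec_diagonal]
  ring

end

theorem sigmoid_eq_real_sigmoid : sigmoid = Real.sigmoid :=
  funext fun _ => one_div _

theorem hasDerivAt_sigmoid (x : ℝ) :
    HasDerivAt sigmoid (sigmoid x * (1 - sigmoid x)) x :=
  sigmoid_eq_real_sigmoid ▸ Real.hasDerivAt_sigmoid x

theorem hasDerivAt_tanh (x : ℝ) : HasDerivAt Real.tanh (1 - Real.tanh x ^ 2) x := by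
  have cosh_ne_zero : Real.cosh x ≠ 0 := (Real.cosh_pos x).ne'
  rw [funext Real.tanh_eq_sinh_div_cosh]
  refine ((Real.hasDerivAt_sinh x).div (Real.hasDerivAt_cosh x) cosh_ne_zero).congr_deriv ?_
  field_simp

/-- Corollary 2 of the paper: derivative of the LSTM cell state
`c w i = f w i * cprev w i + iGate w i * g w i`, expressed as
`dc/dw = F ⬝ c' + ψ ⬝ v' + k`. -/
theorem lstm_cell_state_hasDerivAt
    (n k : ℕ) (hn : 0 < n) (hk : 0 < k) (w₀ : ℝ)
    (Wf Wi Wg : ℝ → Matrix (Fin n) (Fin k) ℝ)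
    (Ef Ei Eg : Matrix (Fin n) (Fin k) ℝ)
    (hWf : ∀ i j, HasDerivAt (fun w => Wf w i j) (Ef i j) w₀)
    (hWi : ∀ i j, HasDerivAt (fun w => Wi w i j) (Ei i j) w₀)
    (hWg : ∀ i j, HasDerivAt (fun w => Wg w i j) (Eg i j) w₀)
    (bf bi bg : Fin n → ℝ)
    (v : ℝ → Fin k → ℝ) (v' : Fin k → ℝ)
    (hv : ∀ j, HasDerivAt (fun w => v w j) (v' j) w₀)
    (cprev : ℝ → Fin n → ℝ) (c' : Fin n → ℝ)
    (hcprev : ∀ i, HasDerivAt (fun w => cprev w i) (c' i) w₀)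
    (f iGate g c : ℝ → Fin n → ℝ)
    (hf : ∀ w i, f w i = sigmoid (((Wf w).mulVec (v w)) i + bf i))
    (hi : ∀ w i, iGate w i = sigmoid (((Wi w).mulVec (v w)) i + bi i))
    (hg : ∀ w i, g w i = Real.tanh (((Wg w).mulVec (v w)) i + bg i))
    (hc : ∀ w i, c w i = f w i * cprev w i + iGate w i * g w i)
    (F : Matrix (Fin n) (Fin n) ℝ) (ψ : Matrix (Fin n) (Fin k) ℝ) (kvec : Fin n → ℝ)
    (hF : F = Matrix.diagonal (f w₀))
    (hψ : ψ =
        Matrix.diagonal (fun j => f w₀ j * (1 - f w₀ j) * cprev w₀ j) * Wf w₀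
      + Matrix.diagonal (fun j => (1 - (g w₀ j) ^ 2) * iGate w₀ j) * Wg w₀
      + Matrix.diagonal (fun j => iGate w₀ j * (1 - iGate w₀ j) * g w₀ j) * Wi w₀)
    (hkvec : kvec =
        (Matrix.diagonal (fun j => f w₀ j * (1 - f w₀ j) * cprev w₀ j)).mulVec
          (Ef.mulVec (v w₀))
      + (Matrix.diagonal (fun j => (1 - (g w₀ j) ^ 2) * iGate w₀ j)).mulVec
          (Eg.mulVec (v w₀))
      + (Matrix.diagonal (fun j => iGate w₀ j * (1 - iGate w₀ j) * g w₀ j)).mulVec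
          (Ei.mulVec (v w₀))) :
    ∀ i, HasDerivAt (fun w => c w i)
      ((F.mulVec c') i + (ψ.mulVec v') i + kvec i) w₀ := by
  subst hF hψ hkvec
  simpa only [hf, hi, hg, hc] using
    lstm_cell_state_hasDerivAt_general hWf hWi hWg hv hcprev hf hi hg
      (fun _ => hasDerivAt_sigmoid _) (fun _ => hasDerivAt_sigmoid _) fun _ => hasDerivAt_tanh _
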